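/- Let (ξ_i)_{i∈I} be a finite family of {0,1}-valued random variables with dependency graph G on I. Set p_i := E[ξ_i], p_{ij} := E[ξ_i ξ_j], λ := ∑_{i∈I} p_i (assume λ > 0), W := ∑_{i∈I} ξ_i, and let Z be a Poisson random variable with mean λ. Then d_TV(W, Z) ≤ min(3, λ^{-1}) · ( ∑_{i∈I} ∑_{j∈N_i∖{i}} p_{ij} + ∑_{i∈I} ∑_{j∈N_i} p_i p_j ), where d_TV(W,Z) := sup_{A⊆ℕ} |P(W∈A) − P(Z∈A)| is the total variation distance between the laws of W and Z. -/

import Mathlib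

open MeasureTheory Filter
open scoped ENNReal NNReal Topology

noncomputable section

/-- `G` is a dependency graph for the family of random variables `ξ`: whenever `I₁, I₂` are
disjoint sets of indices with no edge of `G` joining a point of `I₁` to a point of `I₂`, the
families `(ξ i)_{i ∈ I₁}` and `(ξ j)_{j ∈ I₂}` are independent. -/
def HasDependencyGraph {Ω : Type*} [MeasurableSpace Ω] (P : Measure Ω) {I : Type*}
    (G : SimpleGraph I) {β : Type*} [MeasurableSpace β] (ξ : I → Ω → β) : Prop :=
  ∀ I₁ I₂ : Set I, Disjoint I₁ I₂ →
    (∀ i ∈ I₁, ∀ j ∈ I₂, ¬ G.Adj i j) →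
    ProbabilityTheory.IndepFun (fun ω => fun i : I₁ => ξ i ω)
      (fun ω => fun j : I₂ => ξ j ω) P

/-!
For `A ⊆ ℕ`, let `g` solve Stein's equation `r g(k + 1) - k g(k) = 1_A(k) - Po(r)(A)`, so that
`P(W ∈ A) - Po(r)(A) = E[r g(W + 1) - W g(W)]`. For `k ≥ 1` the increments of `g` are at most
`(1 - e^{-r}) / r`: replacing `A` by its complement changes the sign of `g`, so an upper bound
suffices, and the increment at `k` is linear in `1_A` with `k` as the only point of positive weight.
As `r = ∑ p_i`, the expectation is the sum over `i` of `p_i E[g(W + 1)] - E[ξ_i g(W)]`. Let `V_i`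
be the sum of the `ξ_j` with `j` outside the neighborhood of `i`. It is independent of `ξ_i`, and
replacing `W + 1` in the first term, and `W` in the second, by `V_i + 1` costs at most the bound on
the increments times the number of `ξ_j` that were dropped.
-/

namespace SteinChen

open ProbabilityTheory Finset

section PoissonMeasure

variable {r : ℝ≥0} {h : ℕ → ℝ}

lemma poissonMeasure_real_eq_tsum_subtype (r : ℝ≥0) (A : Set ℕ) :
    Po(r).real A = ∑' j : A, Real.exp (-r) * (r : ℝ) ^ (j : ℕ) / (Nat.factorial j : ℝ) := by
  rw [← integral_indicator_one .of_discrete, integral_poissonMeasure,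
    tsum_subtype A fun j : ℕ ↦ Real.exp (-r) * (r : ℝ) ^ j / (Nat.factorial j : ℝ)]
  congr with j
  by_cases hj : j ∈ A <;> simp [hj]

lemma succ_mul_poissonMeasure_real_singleton_succ (r : ℝ≥0) (k : ℕ) :
    ((k : ℝ) + 1) * Po(r).real {k + 1} = r * Po(r).real {k} := by
  rw [poissonMeasure_real_singleton, poissonMeasure_real_singleton, Nat.factorial_succ]
  push_cast
  field_simp
  ring

lemma hasSum_poissonMeasure_real_singleton_mul (hh : ∀ k, h k ∈ Set.Icc 0 1) :
    HasSum (fun k ↦ Po(r).real {k} * h k) (∫ n, h n ∂Po(r)) := by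
  simpa only [poissonMeasure_real_singleton, smul_eq_mul] using
    hasSum_integral_poissonMeasure (.of_mem_Icc 0 1 .of_discrete (ae_of_all _ hh))

lemma measureReal_Iio_eq_sum_range (μ : Measure ℕ) [IsFiniteMeasure μ] (k : ℕ) :
    μ.real (Set.Iio k) = ∑ i ∈ range k, μ.real {i} := by
  rw [sum_measureReal_singleton, coe_range]

lemma mul_poissonMeasure_real_Iio_le (r : ℝ≥0) (k : ℕ) :
    r * Po(r).real (Set.Iio k) ≤ k * (Po(r).real (Set.Iio (k + 1)) - Po(r).real {0}) := by
  rw [measureReal_Iio_eq_sum_range, measureReal_Iio_eq_sum_range, sum_range_succ',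
    add_sub_cancel_right, mul_sum, mul_sum]
  refine sum_le_sum fun i hi ↦ ?_
  rw [← succ_mul_poissonMeasure_real_singleton_succ]
  gcongr
  exact_mod_cast mem_range.1 hi

lemma hasSum_poissonMeasure_real_singleton_add (r : ℝ≥0) (k : ℕ) :
    HasSum (fun i ↦ Po(r).real {i + k}) (1 - Po(r).real (Set.Iio k)) := by
  rw [measureReal_Iio_eq_sum_range]
  refine (hasSum_nat_add_iff' k).2 ?_
  simpa only [poissonMeasure_real_singleton] using hasSum_one_poissonMeasure r

lemma mul_one_sub_poissonMeasure_real_Iio_succ_le (r : ℝ≥0) (k : ℕ) :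
    k * (1 - Po(r).real (Set.Iio (k + 1))) ≤ r * (1 - Po(r).real (Set.Iio k)) := by
  refine hasSum_le (fun i ↦ ?_) ((hasSum_poissonMeasure_real_singleton_add r (k + 1)).mul_left _)
    ((hasSum_poissonMeasure_real_singleton_add r k).mul_left _)
  rw [← succ_mul_poissonMeasure_real_singleton_succ, add_assoc]
  gcongr
  exact_mod_cast (by lia : k ≤ i + k + 1)

end PoissonMeasure

section SteinSolution

variable {r : ℝ≥0} {h : ℕ → ℝ}

/-- The sum `∑_{i < k} P(Z = i) (h i - E[h Z])` for `Z` Poisson of mean `r`; up to normalization it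
is the solution of Stein's equation at `k`. -/
def centeredPartialSum (r : ℝ≥0) (h : ℕ → ℝ) (k : ℕ) : ℝ :=
  ∑ i ∈ range k, Po(r).real {i} * (h i - ∫ n, h n ∂Po(r))

/-- The solution `g` of Stein's equation `r g(k + 1) - k g(k) = h(k) - E[h Z]`, `Z` Poisson of mean
`r`. The equation leaves `g 0` free; here it is `0 / 0 = 0`. -/
def steinSolution (r : ℝ≥0) (h : ℕ → ℝ) (k : ℕ) : ℝ :=
  centeredPartialSum r h k / (k * Po(r).real {k})

lemma centeredPartialSum_succ (r : ℝ≥0) (h : ℕ → ℝ) (k : ℕ) :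
    centeredPartialSum r h (k + 1) =
      centeredPartialSum r h k + Po(r).real {k} * (h k - ∫ n, h n ∂Po(r)) :=
  sum_range_succ _ _

lemma centeredPartialSum_eq_sub (r : ℝ≥0) (h : ℕ → ℝ) (k : ℕ) :
    centeredPartialSum r h k = ∑ i ∈ range k, Po(r).real {i} * h i -
      (∫ n, h n ∂Po(r)) * Po(r).real (Set.Iio k) := by
  simp only [centeredPartialSum, mul_sub, sum_sub_distrib, ← sum_mul]
  rw [measureReal_Iio_eq_sum_range, mul_comm (∑ i ∈ range k, _)]

lemma mul_steinSolution_succ (hr : 0 < r) (h : ℕ → ℝ) (k : ℕ) :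
    r * steinSolution r h (k + 1) = centeredPartialSum r h (k + 1) / Po(r).real {k} := by
  have hr' : (r : ℝ) ≠ 0 := by positivity
  rw [steinSolution, Nat.cast_succ, succ_mul_poissonMeasure_real_singleton_succ, mul_div_assoc',
    mul_div_mul_left _ _ hr']

lemma natCast_mul_steinSolution (r : ℝ≥0) (h : ℕ → ℝ) (k : ℕ) :
    k * steinSolution r h k = centeredPartialSum r h k / Po(r).real {k} := by
  rcases eq_or_ne k 0 with rfl | hk
  · simp [centeredPartialSum]
  · rw [steinSolution, mul_div_assoc', mul_div_mul_left _ _ (Nat.cast_ne_zero.2 hk)]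

theorem steinSolution_equation (hr : 0 < r) (h : ℕ → ℝ) (k : ℕ) :
    r * steinSolution r h (k + 1) - k * steinSolution r h k = h k - ∫ n, h n ∂Po(r) := by
  rw [mul_steinSolution_succ hr, natCast_mul_steinSolution, ← sub_div, centeredPartialSum_succ,
    add_sub_cancel_left, mul_div_cancel_left₀ _ (poissonMeasure_real_singleton_pos k hr).ne']

-- The left-hand side is linear in `h`, and its coefficient at `h i` is nonpositive unless `i = k`,
-- so only the atom at `k` contributes to the upper bound.
lemma mul_centeredPartialSum_succ_sub_le (hh : ∀ k, h k ∈ Set.Icc 0 1) (k : ℕ) :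
    k * centeredPartialSum r h (k + 1) - r * centeredPartialSum r h k ≤
      k * Po(r).real {k} * (1 - Po(r).real {0}) := by
  have term_nonneg (i : ℕ) : 0 ≤ Po(r).real {i} * h i := mul_nonneg measureReal_nonneg (hh i).1
  have sum_succ_le_integral : ∑ i ∈ range (k + 1), Po(r).real {i} * h i ≤ ∫ n, h n ∂Po(r) :=
    sum_le_hasSum _ (fun i _ ↦ term_nonneg i) (hasSum_poissonMeasure_real_singleton_mul hh)
  rw [centeredPartialSum_eq_sub, centeredPartialSum_eq_sub]
  rw [sum_range_succ] at sum_succ_le_integral ⊢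
  set below := ∑ i ∈ range k, Po(r).real {i} * h i
  set above := ∫ n, h n ∂Po(r) - (below + Po(r).real {k} * h k) with above_def
  set F := Po(r).real (Set.Iio k)
  set F' := Po(r).real (Set.Iio (k + 1))
  have below_nonneg : 0 ≤ below := sum_nonneg fun i _ ↦ term_nonneg i
  have above_nonneg : 0 ≤ above := sub_nonneg.2 sum_succ_le_integral
  have lower_tail : r * F ≤ k * (F' - Po(r).real {0}) := mul_poissonMeasure_real_Iio_le r k
  have upper_tail : k * (1 - F') ≤ r * (1 - F) := mul_one_sub_poissonMeasure_real_Iio_succ_le r k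
  have coeff_below : k * (1 - F') - r * (1 - F) ≤ 0 := sub_nonpos.2 upper_tail
  have coeff_above : r * F - k * F' ≤ 0 := by
    have : 0 ≤ k * Po(r).real {0} := by positivity
    linarith
  have coeff_atom : 0 ≤ k * (1 - F') + r * F := by
    have : 0 ≤ 1 - F' := sub_nonneg.2 measureReal_le_one
    positivity
  calc k * (below + Po(r).real {k} * h k - (∫ n, h n ∂Po(r)) * F')
        - r * (below - (∫ n, h n ∂Po(r)) * F)
      = below * (k * (1 - F') - r * (1 - F)) + above * (r * F - k * F')
        + Po(r).real {k} * (h k * (k * (1 - F') + r * F)) := by rw [above_def]; ring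
    _ ≤ 0 + 0 + Po(r).real {k} * (1 * (k * (1 - F') + k * (F' - Po(r).real {0}))) := by
        gcongr
        · exact mul_nonpos_of_nonneg_of_nonpos below_nonneg coeff_below
        · exact mul_nonpos_of_nonneg_of_nonpos above_nonneg coeff_above
        · exact (hh k).2
    _ = k * Po(r).real {k} * (1 - Po(r).real {0}) := by ring

lemma steinSolution_succ_sub_le (hr : 0 < r) (hh : ∀ k, h k ∈ Set.Icc 0 1) {k : ℕ} (hk : k ≠ 0) :
    steinSolution r h (k + 1) - steinSolution r h k ≤ (1 - Real.exp (-r)) / r := by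
  have hr' : (0 : ℝ) < r := by positivity
  have hkw : (0 : ℝ) < k * Po(r).real {k} :=
    mul_pos (by positivity) (poissonMeasure_real_singleton_pos k hr)
  have mass_zero : Po(r).real {0} = Real.exp (-r) := by simp [poissonMeasure_real_singleton]
  have scaled_increment : r * (k * Po(r).real {k}) *
      (steinSolution r h (k + 1) - steinSolution r h k) =
        k * centeredPartialSum r h (k + 1) - r * centeredPartialSum r h k := by
    rw [steinSolution, steinSolution, Nat.cast_succ, succ_mul_poissonMeasure_real_singleton_succ]
    have := (poissonMeasure_real_singleton_pos k hr).ne'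
    field_simp
  rw [le_div_iff₀ hr', ← mul_le_mul_iff_right₀ hkw, ← mass_zero]
  linarith [mul_centeredPartialSum_succ_sub_le (r := r) hh k]

lemma steinSolution_one_sub (hh : Integrable h Po(r)) (k : ℕ) :
    steinSolution r (fun i ↦ 1 - h i) k = -steinSolution r h k := by
  have integral_one_sub : ∫ n, (1 - h n) ∂Po(r) = 1 - ∫ n, h n ∂Po(r) := by
    simp [integral_sub (integrable_const 1) hh]
  simp only [steinSolution, centeredPartialSum, integral_one_sub, sub_sub_sub_cancel_left,
    ← neg_div, ← sum_neg_distrib, ← mul_neg, neg_sub]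

theorem abs_steinSolution_succ_sub_le (hr : 0 < r) (hh : ∀ k, h k ∈ Set.Icc 0 1) {k : ℕ}
    (hk : k ≠ 0) :
    |steinSolution r h (k + 1) - steinSolution r h k| ≤ (1 - Real.exp (-r)) / r := by
  have complement := steinSolution_succ_sub_le hr (h := fun i ↦ 1 - h i)
    (fun i ↦ Set.Icc.mem_iff_one_sub_mem.1 (hh i)) hk
  simp only [steinSolution_one_sub (.of_mem_Icc 0 1 .of_discrete (ae_of_all _ hh))] at complement
  exact abs_le.2 ⟨by linarith, steinSolution_succ_sub_le hr hh hk⟩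

lemma one_sub_exp_neg_div_le_min {t : ℝ} (ht : 0 < t) :
    (1 - Real.exp (-t)) / t ≤ min 1 t⁻¹ := by
  refine le_min ?_ ?_
  · rw [div_le_iff₀ ht]
    linarith [Real.add_one_le_exp (-t)]
  · rw [inv_eq_one_div]
    gcongr
    exact sub_le_self _ (Real.exp_pos _).le

end SteinSolution

section LocalDependence

variable {Ω : Type*} [MeasurableSpace Ω] {P : Measure Ω} {f : ℕ → ℝ} {D : ℝ}

lemma abs_add_sub_le_mul (hf : ∀ k, |f (k + 1) - f k| ≤ D) (m n : ℕ) :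
    |f (m + n) - f m| ≤ D * n := by
  have := dist_le_Ico_sum_of_dist_le (Nat.le_add_right m n) (f := f) (d := fun _ ↦ D)
    fun {k} _ _ ↦ by simpa only [Real.dist_eq, abs_sub_comm] using hf k
  simpa [Real.dist_eq, abs_sub_comm, mul_comm] using this

lemma aemeasurable_of_natCast {Y : Ω → ℕ} (hY : AEMeasurable (fun ω ↦ (Y ω : ℝ)) P) :
    AEMeasurable Y P := by
  simpa only [Function.comp_def, Nat.floor_natCast] using Nat.measurable_floor.comp_aemeasurable hY

lemma integrable_comp_of_abs_succ_sub_le [IsFiniteMeasure P] (hf : ∀ k, |f (k + 1) - f k| ≤ D)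
    {Y : Ω → ℕ} (hY : Integrable (fun ω ↦ (Y ω : ℝ)) P) : Integrable (fun ω ↦ f (Y ω)) P := by
  have aestronglyMeasurable_comp : AEStronglyMeasurable (fun ω ↦ f (Y ω)) P :=
    (Measurable.of_discrete.comp_aemeasurable
      (aemeasurable_of_natCast hY.aemeasurable)).aestronglyMeasurable
  refine ((integrable_const |f 0|).add (hY.const_mul D)).mono' aestronglyMeasurable_comp
    (ae_of_all _ fun ω ↦ ?_)
  calc |f (Y ω)| ≤ |f 0| + |f (Y ω) - f 0| := by
        linarith [abs_sub_abs_le_abs_sub (f (Y ω)) (f 0)]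
    _ ≤ |f 0| + D * Y ω := by
        simpa only [zero_add, add_le_add_iff_left] using abs_add_sub_le_mul hf 0 (Y ω)

lemma integrable_natCast_add {U V : Ω → ℕ} (hU : Integrable (fun ω ↦ (U ω : ℝ)) P)
    (hV : Integrable (fun ω ↦ (V ω : ℝ)) P) : Integrable (fun ω ↦ ((U ω + V ω : ℕ) : ℝ)) P := by
  simpa only [Nat.cast_add] using! hU.add hV

lemma integrable_mul_of_mem_Icc {Y Z : Ω → ℝ} (hYm : AEStronglyMeasurable Y P)
    (hY : ∀ᵐ ω ∂P, Y ω ∈ Set.Icc 0 1) (hZ : Integrable Z P) :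
    Integrable (fun ω ↦ Y ω * Z ω) P :=
  hZ.bdd_mul (c := 1) hYm <| hY.mono fun ω hω ↦ by
    simpa only [Real.norm_eq_abs, abs_of_nonneg hω.1] using hω.2

lemma abs_integral_mul_comp_add_sub_le [IsFiniteMeasure P] (hf : ∀ k, |f (k + 1) - f k| ≤ D)
    {Y : Ω → ℝ} (hYm : AEStronglyMeasurable Y P) (hY : ∀ᵐ ω ∂P, Y ω ∈ Set.Icc 0 1)
    {U V : Ω → ℕ} (hU : Integrable (fun ω ↦ (U ω : ℝ)) P)
    (hV : Integrable (fun ω ↦ (V ω : ℝ)) P) :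
    |∫ ω, Y ω * f (V ω + U ω) ∂P - ∫ ω, Y ω * f (V ω) ∂P| ≤ D * ∫ ω, Y ω * U ω ∂P := by
  have integrable_mul_comp {Z : Ω → ℕ} (hZ : Integrable (fun ω ↦ (Z ω : ℝ)) P) :
      Integrable (fun ω ↦ Y ω * f (Z ω)) P :=
    integrable_mul_of_mem_Icc hYm hY (integrable_comp_of_abs_succ_sub_le hf hZ)
  rw [← integral_sub (integrable_mul_comp (integrable_natCast_add hV hU))
    (integrable_mul_comp hV), ← integral_const_mul, ← Real.norm_eq_abs]
  refine norm_integral_le_of_norm_le ((integrable_mul_of_mem_Icc hYm hY hU).const_mul D)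
    (hY.mono fun ω hω ↦ ?_)
  rw [← mul_sub, Real.norm_eq_abs, abs_mul, abs_of_nonneg hω.1, mul_left_comm]
  exact mul_le_mul_of_nonneg_left (abs_add_sub_le_mul hf _ _) hω.1

lemma natCast_mem_Icc_of_bernoulli {X : Ω → ℕ} (hX : ∀ᵐ ω ∂P, X ω = 0 ∨ X ω = 1) :
    ∀ᵐ ω ∂P, (X ω : ℝ) ∈ Set.Icc 0 1 := by
  filter_upwards [hX] with ω hω
  rcases hω with h | h <;> simp [h]

lemma aestronglyMeasurable_natCast {X : Ω → ℕ} (hX : AEMeasurable X P) :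
    AEStronglyMeasurable (fun ω ↦ (X ω : ℝ)) P :=
  (measurable_from_top.comp_aemeasurable hX).aestronglyMeasurable

lemma integrable_natCast_of_bernoulli [IsFiniteMeasure P] {X : Ω → ℕ} (hXm : AEMeasurable X P)
    (hX : ∀ᵐ ω ∂P, X ω = 0 ∨ X ω = 1) : Integrable (fun ω ↦ (X ω : ℝ)) P :=
  .of_mem_Icc 0 1 (aestronglyMeasurable_natCast hXm).aemeasurable
    (natCast_mem_Icc_of_bernoulli hX)

-- Both `f (V + (X + U))` and `f (V + U)` are compared with `f V`, which is independent of `X`.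
lemma abs_integral_mul_integral_comp_sub_le [IsProbabilityMeasure P]
    (hf : ∀ k, |f (k + 1) - f k| ≤ D) {X U V : Ω → ℕ} (hXm : AEMeasurable X P)
    (hX : ∀ᵐ ω ∂P, X ω = 0 ∨ X ω = 1) (hU : Integrable (fun ω ↦ (U ω : ℝ)) P)
    (hV : Integrable (fun ω ↦ (V ω : ℝ)) P) (hXV : IndepFun X V P) :
    |(∫ ω, (X ω : ℝ) ∂P) * ∫ ω, f (V ω + (X ω + U ω)) ∂P - ∫ ω, X ω * f (V ω + U ω) ∂P| ≤
      D * (∫ ω, (X ω : ℝ) * U ω ∂P +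
        (∫ ω, (X ω : ℝ) ∂P) * ∫ ω, ((X ω + U ω : ℕ) : ℝ) ∂P) := by
  have shift_all : |∫ ω, f (V ω + (X ω + U ω)) ∂P - ∫ ω, f (V ω) ∂P| ≤
      D * ∫ ω, ((X ω + U ω : ℕ) : ℝ) ∂P := by
    simpa only [one_mul] using abs_integral_mul_comp_add_sub_le hf
      (aestronglyMeasurable_const (b := (1 : ℝ))) (by simp)
      (integrable_natCast_add (integrable_natCast_of_bernoulli hXm hX) hU) hV
  have shift_near := abs_integral_mul_comp_add_sub_le hf (aestronglyMeasurable_natCast hXm)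
    (natCast_mem_Icc_of_bernoulli hX) hU hV
  have factor : ∫ ω, X ω * f (V ω) ∂P = (∫ ω, (X ω : ℝ) ∂P) * ∫ ω, f (V ω) ∂P :=
    (hXV.comp (φ := fun n : ℕ ↦ (n : ℝ)) (ψ := f) measurable_from_top
      measurable_from_top).integral_fun_mul_eq_mul_integral (aestronglyMeasurable_natCast hXm)
      (integrable_comp_of_abs_succ_sub_le hf hV).aestronglyMeasurable
  have mean_nonneg : 0 ≤ ∫ ω, (X ω : ℝ) ∂P := integral_nonneg fun ω ↦ Nat.cast_nonneg _
  rw [factor] at shift_near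
  set m := ∫ ω, (X ω : ℝ) ∂P
  calc _ = |m * (∫ ω, f (V ω + (X ω + U ω)) ∂P - ∫ ω, f (V ω) ∂P)
        - (∫ ω, X ω * f (V ω + U ω) ∂P - m * ∫ ω, f (V ω) ∂P)| := by ring_nf
    _ ≤ m * |∫ ω, f (V ω + (X ω + U ω)) ∂P - ∫ ω, f (V ω) ∂P|
        + |∫ ω, X ω * f (V ω + U ω) ∂P - m * ∫ ω, f (V ω) ∂P| := by
        rw [← abs_of_nonneg mean_nonneg, ← abs_mul, abs_of_nonneg mean_nonneg]
        exact abs_sub _ _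
    _ ≤ m * (D * ∫ ω, ((X ω + U ω : ℕ) : ℝ) ∂P) + D * ∫ ω, (X ω : ℝ) * U ω ∂P := by gcongr
    _ = _ := by ring

variable {I : Type*} {ξ : I → Ω → ℕ} {g : ℕ → ℝ}

lemma integrable_natCast_sum (hξ : ∀ i, Integrable (fun ω ↦ (ξ i ω : ℝ)) P) (s : Finset I) :
    Integrable (fun ω ↦ ((∑ i ∈ s, ξ i ω : ℕ) : ℝ)) P := by
  simpa only [Nat.cast_sum] using integrable_finsetSum s fun i _ ↦ hξ i

lemma abs_succ_sub_le_max_of_ne_zero (hg : ∀ k ≠ 0, |g (k + 1) - g k| ≤ D) (k : ℕ) :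
    |g (k + 1) - g k| ≤ max D |g 1 - g 0| := by
  rcases eq_or_ne k 0 with rfl | hk
  · exact le_max_right _ _
  · exact (hg k hk).trans (le_max_left _ _)

lemma indicator_one_mem_Icc {α : Type*} (A : Set α) (a : α) :
    A.indicator (1 : α → ℝ) a ∈ Set.Icc 0 1 :=
  ⟨Set.indicator_nonneg (fun _ _ ↦ zero_le_one) a,
    Set.indicator_le_self' (fun _ _ ↦ zero_le_one) a⟩

lemma integral_indicator_one_comp {W : Ω → ℕ} (hW : AEMeasurable W P) (A : Set ℕ) :
    ∫ ω, A.indicator 1 (W ω) ∂P = P.real {ω | W ω ∈ A} := by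
  rw [← integral_map hW .of_discrete, integral_indicator_one .of_discrete,
    map_measureReal_apply_of_aemeasurable hW .of_discrete]
  rfl

variable [IsProbabilityMeasure P] [Fintype I]

lemma abs_mean_mul_integral_sub_le [DecidableEq I] (hmeas : ∀ i, AEMeasurable (ξ i) P)
    (hBer : ∀ i, ∀ᵐ ω ∂P, ξ i ω = 0 ∨ ξ i ω = 1) (hg : ∀ k ≠ 0, |g (k + 1) - g k| ≤ D)
    {i : I} {N : Finset I} (hi : i ∉ N)
    (hindep : IndepFun (ξ i) (fun ω ↦ ∑ j ∈ (insert i N)ᶜ, ξ j ω) P) :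
    |(∫ ω, (ξ i ω : ℝ) ∂P) * ∫ ω, g (∑ j, ξ j ω + 1) ∂P - ∫ ω, ξ i ω * g (∑ j, ξ j ω) ∂P| ≤
      D * (∑ j ∈ N, ∫ ω, (ξ i ω : ℝ) * ξ j ω ∂P +
        ∑ j ∈ insert i N, (∫ ω, (ξ i ω : ℝ) ∂P) * ∫ ω, (ξ j ω : ℝ) ∂P) := by
  have integrable_ξ (j : I) : Integrable (fun ω ↦ (ξ j ω : ℝ)) P :=
    integrable_natCast_of_bernoulli (hmeas j) (hBer j)
  have split (ω : Ω) : ∑ j, ξ j ω = ∑ j ∈ (insert i N)ᶜ, ξ j ω + (ξ i ω + ∑ j ∈ N, ξ j ω) := by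
    rw [← sum_insert (f := fun j ↦ ξ j ω) hi, sum_compl_add_sum]
  have integral_near : ∑ j ∈ N, ∫ ω, (ξ i ω : ℝ) * ξ j ω ∂P =
      ∫ ω, (ξ i ω : ℝ) * ((∑ j ∈ N, ξ j ω : ℕ) : ℝ) ∂P := by
    simp only [Nat.cast_sum, mul_sum]
    exact (integral_finsetSum _ fun j _ ↦ integrable_mul_of_mem_Icc
      (aestronglyMeasurable_natCast (hmeas i)) (natCast_mem_Icc_of_bernoulli (hBer i))
      (integrable_ξ j)).symm
  have integral_nbhd : ∑ j ∈ insert i N, ∫ ω, (ξ j ω : ℝ) ∂P =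
      ∫ ω, ((ξ i ω + ∑ j ∈ N, ξ j ω : ℕ) : ℝ) ∂P := by
    rw [← integral_finsetSum _ fun j _ ↦ integrable_ξ j]
    simp only [sum_insert hi, Nat.cast_add, Nat.cast_sum]
  have shift_index : ∫ ω, ξ i ω * g (∑ j, ξ j ω) ∂P =
      ∫ ω, ξ i ω * g (∑ j ∈ (insert i N)ᶜ, ξ j ω + ∑ j ∈ N, ξ j ω + 1) ∂P := by
    refine integral_congr_ae ((hBer i).mono fun ω hω ↦ ?_)
    rcases hω with h | h
    · simp [h]
    · simp only [split ω, h, add_comm 1, add_assoc]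
  rw [← mul_sum, integral_near, integral_nbhd, shift_index]
  simp only [split]
  exact abs_integral_mul_integral_comp_sub_le (f := fun k ↦ g (k + 1))
    (fun k ↦ hg (k + 1) k.succ_ne_zero) (hmeas i) (hBer i) (integrable_natCast_sum integrable_ξ N)
    (integrable_natCast_sum integrable_ξ _) hindep

lemma integral_stein_operator_sum (hmeas : ∀ i, AEMeasurable (ξ i) P)
    (hBer : ∀ i, ∀ᵐ ω ∂P, ξ i ω = 0 ∨ ξ i ω = 1) (hg : ∀ k ≠ 0, |g (k + 1) - g k| ≤ D)
    {m : ℝ} (hm : m = ∑ i, ∫ ω, (ξ i ω : ℝ) ∂P) :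
    ∫ ω, (m * g (∑ i, ξ i ω + 1)
        - ((∑ i, ξ i ω : ℕ) : ℝ) * g (∑ i, ξ i ω)) ∂P =
      ∑ i, ((∫ ω, (ξ i ω : ℝ) ∂P) * ∫ ω, g (∑ j, ξ j ω + 1) ∂P
        - ∫ ω, ξ i ω * g (∑ j, ξ j ω) ∂P) := by
  have integrable_sum := integrable_natCast_sum
    (fun i ↦ integrable_natCast_of_bernoulli (hmeas i) (hBer i)) univ
  have integrable_succ : Integrable (fun ω ↦ g (∑ j, ξ j ω + 1)) P :=
    integrable_comp_of_abs_succ_sub_le (f := fun k ↦ g (k + 1))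
      (fun k ↦ hg (k + 1) k.succ_ne_zero) integrable_sum
  have integrable_mul (i : I) : Integrable (fun ω ↦ ξ i ω * g (∑ j, ξ j ω)) P :=
    integrable_mul_of_mem_Icc (aestronglyMeasurable_natCast (hmeas i))
      (natCast_mem_Icc_of_bernoulli (hBer i))
      (integrable_comp_of_abs_succ_sub_le (abs_succ_sub_le_max_of_ne_zero hg) integrable_sum)
  simp only [hm, Nat.cast_sum, sum_mul]
  rw [integral_sub (integrable_finsetSum _ fun i _ ↦ integrable_succ.const_mul _)
    (integrable_finsetSum _ fun i _ ↦ integrable_mul i),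
    integral_finsetSum _ fun i _ ↦ integrable_succ.const_mul _,
    integral_finsetSum _ fun i _ ↦ integrable_mul i, ← sum_sub_distrib]
  simp only [integral_const_mul]

theorem abs_integral_stein_operator_sum_le [DecidableEq I] (hmeas : ∀ i, AEMeasurable (ξ i) P)
    (hBer : ∀ i, ∀ᵐ ω ∂P, ξ i ω = 0 ∨ ξ i ω = 1) (hg : ∀ k ≠ 0, |g (k + 1) - g k| ≤ D)
    {m : ℝ} (hm : m = ∑ i, ∫ ω, (ξ i ω : ℝ) ∂P) {N : I → Finset I} (hN : ∀ i, i ∉ N i)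
    (hindep : ∀ i, IndepFun (ξ i) (fun ω ↦ ∑ j ∈ (insert i (N i))ᶜ, ξ j ω) P) :
    |∫ ω, (m * g (∑ i, ξ i ω + 1)
        - ((∑ i, ξ i ω : ℕ) : ℝ) * g (∑ i, ξ i ω)) ∂P| ≤
      D * (∑ i, ∑ j ∈ N i, ∫ ω, (ξ i ω : ℝ) * ξ j ω ∂P +
        ∑ i, ∑ j ∈ insert i (N i), (∫ ω, (ξ i ω : ℝ) ∂P) * ∫ ω, (ξ j ω : ℝ) ∂P) := by
  rw [integral_stein_operator_sum hmeas hBer hg hm, ← sum_add_distrib, mul_sum]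
  exact (abs_sum_le_sum_abs _ _).trans <| sum_le_sum fun i _ ↦
    abs_mean_mul_integral_sub_le hmeas hBer hg (hN i) (hindep i)

theorem measureReal_mem_sub_poissonMeasure_real_eq_integral {r : ℝ≥0} (hr : 0 < r) {W : Ω → ℕ}
    (hW : AEMeasurable W P) (A : Set ℕ) :
    P.real {ω | W ω ∈ A} - Po(r).real A =
      ∫ ω, (r * steinSolution r (A.indicator 1) (W ω + 1)
        - W ω * steinSolution r (A.indicator 1) (W ω)) ∂P := by
  simp only [steinSolution_equation hr]
  have integrable_indicator : Integrable (fun ω ↦ A.indicator (1 : ℕ → ℝ) (W ω)) P :=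
    .of_mem_Icc 0 1 ((Measurable.of_discrete (f := A.indicator 1)).comp_aemeasurable hW)
      (ae_of_all _ fun ω ↦ indicator_one_mem_Icc A (W ω))
  rw [integral_sub integrable_indicator (integrable_const _), integral_indicator_one_comp hW,
    integral_const, integral_indicator_one .of_discrete, probReal_univ, one_smul]

end LocalDependence

end SteinChen

lemma HasDependencyGraph.indepFun_sum_compl_insert_neighborFinset {Ω : Type*} [MeasurableSpace Ω]
    {P : Measure Ω} {I : Type*} [Fintype I] [DecidableEq I] {G : SimpleGraph I}
    [DecidableRel G.Adj] {β : Type*} [MeasurableSpace β] [AddCommMonoid β] [MeasurableAdd₂ β]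
    {ξ : I → Ω → β} (hdep : HasDependencyGraph P G ξ) (i : I) :
    ProbabilityTheory.IndepFun (ξ i)
      (fun ω ↦ ∑ j ∈ (insert i (G.neighborFinset i))ᶜ, ξ j ω) P := by
  set far := (insert i (G.neighborFinset i))ᶜ with far_def
  have not_adj_far : ∀ a ∈ ({i} : Set I), ∀ j ∈ (far : Set I), ¬ G.Adj a j := by
    simp +contextual [far_def]
  have indep_far := hdep {i} far (by simp [far_def]) not_adj_far
  have measurable_eval : Measurable fun v : ({i} : Set I) → β ↦ v ⟨i, rfl⟩ := measurable_pi_apply _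
  have measurable_sum : Measurable fun v : ↥(far : Set I) → β ↦ ∑ j : far, v j := by fun_prop
  have sum_far (ω : Ω) : ∑ j : far, ξ j ω = ∑ j ∈ far, ξ j ω := Finset.sum_coe_sort far (ξ · ω)
  simpa only [Function.comp_def, sum_far] using
    indep_far.comp measurable_eval measurable_sum

open ProbabilityTheory in
theorem stein_chen_poisson_approximation_general
    {Ω : Type*} [MeasurableSpace Ω] (P : Measure Ω) [IsProbabilityMeasure P]
    {I : Type*} [Fintype I] [DecidableEq I] (N : I → Finset I) (hN : ∀ i, i ∉ N i)
    (ξ : I → Ω → ℕ) (hmeas : ∀ i, AEMeasurable (ξ i) P)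
    (hBer : ∀ i, ∀ᵐ ω ∂P, ξ i ω = 0 ∨ ξ i ω = 1)
    (hindep : ∀ i, IndepFun (ξ i) (fun ω ↦ ∑ j ∈ (insert i (N i))ᶜ, ξ j ω) P)
    (r : ℝ≥0) (hr : r = ∑ i, ∫ ω, (ξ i ω : ℝ) ∂P) (hrpos : 0 < r) :
    (⨆ A : Set ℕ, |P.real {ω | (∑ i, ξ i ω) ∈ A} - Po(r).real A|) ≤
      (1 - Real.exp (-r)) / r *
        ((∑ i, ∑ j ∈ N i, ∫ ω, (ξ i ω : ℝ) * ξ j ω ∂P) +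
          ∑ i, ∑ j ∈ insert i (N i), (∫ ω, (ξ i ω : ℝ) ∂P) * ∫ ω, (ξ j ω : ℝ) ∂P) := by
  refine ciSup_le fun A ↦ ?_
  rw [SteinChen.measureReal_mem_sub_poissonMeasure_real_eq_integral hrpos
    (Finset.aemeasurable_fun_sum _ fun i _ ↦ hmeas i)]
  exact SteinChen.abs_integral_stein_operator_sum_le hmeas hBer
    (fun _ ↦ SteinChen.abs_steinSolution_succ_sub_le hrpos
      (SteinChen.indicator_one_mem_Icc A)) hr hN hindep

/-- The Stein–Chen method for sums of Bernoulli random variables with a dependency graph: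
the total variation distance between the law of `W = ∑ ξ_i` and the Poisson distribution with
mean `λ = ∑ p_i` is bounded in terms of first and second moments over neighborhoods. -/
theorem stein_chen_poisson_approximation
    {Ω : Type*} [MeasurableSpace Ω] (P : Measure Ω) [IsProbabilityMeasure P]
    {I : Type*} [Fintype I] [DecidableEq I] (G : SimpleGraph I) [DecidableRel G.Adj]
    (ξ : I → Ω → ℕ) (hmeas : ∀ i, Measurable (ξ i))
    (hBer : ∀ i ω, ξ i ω = 0 ∨ ξ i ω = 1)
    (hdep : HasDependencyGraph P G ξ)
    (p : I → ℝ) (hp : ∀ i, p i = ∫ ω, (ξ i ω : ℝ) ∂P)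
    (pp : I → I → ℝ) (hpp : ∀ i j, pp i j = ∫ ω, (ξ i ω : ℝ) * (ξ j ω : ℝ) ∂P)
    (lam : ℝ) (hlam : lam = ∑ i, p i) (hlampos : 0 < lam) :
    (⨆ A : Set ℕ,
        |(P {ω | (∑ i, ξ i ω) ∈ A}).toReal -
          ∑' j : A, Real.exp (-lam) * lam ^ (j : ℕ) / (Nat.factorial (j : ℕ) : ℝ)|) ≤
      min 3 lam⁻¹ *
        ((∑ i, ∑ j ∈ G.neighborFinset i, pp i j) +
          ∑ i, ∑ j ∈ insert i (G.neighborFinset i), p i * p j) := by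
  lift lam to ℝ≥0 using hlampos.le
  simp only [hp, hpp, ← SteinChen.poissonMeasure_real_eq_tsum_subtype] at hlam ⊢
  have factor_le := (SteinChen.one_sub_exp_neg_div_le_min hlampos).trans
    (min_le_min_right _ (by norm_num : (1 : ℝ) ≤ 3))
  exact (stein_chen_poisson_approximation_general P (G.neighborFinset ·) (by simp) ξ
    (fun i ↦ (hmeas i).aemeasurable) (fun i ↦ ae_of_all _ (hBer i))
    hdep.indepFun_sum_compl_insert_neighborFinset lam hlam (NNReal.coe_pos.1 hlampos)).trans
      (mul_le_mul_of_nonneg_right factor_le (by positivity))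

end
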